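/- Let (X, μ) be a standard Borel space with a non-atomic Borel probability measure μ. For every k, m, n ∈ ℕ and every pair of finite sequences of indices 1 ≤ k₁, …, k_p ≤ m and 1 ≤ l₁, …, l_q ≤ n, the set E_k = {(f₁,…,f_m,g₁,…,g_n) ∈ L⁰(μ,𝕋)^{m+n} : ρ_{p,q}(f_{k₁},…,f_{k_p},g_{l₁},…,g_{l_q}) ≥ 1/k} is nowhere dense in L⁰(μ,𝕋)^{m+n}. -/

import Mathlib

open MeasureTheory Set

/-- The Borel σ-algebra on the circle group `𝕋 ⊆ ℂ`. -/
noncomputable instance : MeasurableSpace Circle := borel Circle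
instance : BorelSpace Circle := ⟨rfl⟩

/-- The metric `d(f,g) = ∫ |f − g| dμ` inducing the topology of convergence in measure
on `L⁰(μ, 𝕋)`. -/
noncomputable def L0dist {Y : Type*} [MeasurableSpace Y] (ν : Measure Y)
    (f g : Y →ₘ[ν] Circle) : ℝ :=
  ∫ x, ‖(f x : ℂ) - (g x : ℂ)‖ ∂ν

/-- The topology of convergence in measure on `L⁰(μ, 𝕋)`: the topology induced by the metric
`L0dist`, i.e. generated by the open balls of that metric. -/
noncomputable instance L0top {Y : Type*} [MeasurableSpace Y] (ν : Measure Y) :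
    TopologicalSpace (Y →ₘ[ν] Circle) :=
  TopologicalSpace.generateFrom
    {U | ∃ (f : Y →ₘ[ν] Circle) (ε : ℝ), 0 < ε ∧ U = {g | L0dist ν f g < ε}}

/-- The set of products `f₁(B)⋯f_m(B) = {f₁(x₁)⋯f_m(x_m) : x₁,…,x_m ∈ B}`. -/
def prodSet {X : Type*} {G : Type*} [Monoid G] {m : ℕ} (f : Fin m → X → G) (B : Set X) :
    Set G :=
  {g | ∃ x : Fin m → X, (∀ i, x i ∈ B) ∧ g = (List.ofFn fun i => f i (x i)).prod}

/-- `ρ_{m,n}(f₁,…,f_m,g₁,…,g_n)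
  = inf { μ(A) : A Borel, f₁(X∖A)⋯f_m(X∖A) ∩ g₁(X∖A)⋯g_n(X∖A) = ∅ }`. -/
noncomputable def rho {X : Type*} [MeasurableSpace X] {G : Type*} [Monoid G] {m n : ℕ}
    (μ : Measure X) (f : Fin m → X → G) (g : Fin n → X → G) : ℝ :=
  sInf {c : ℝ | ∃ A : Set X, MeasurableSet A ∧
    Disjoint (prodSet f Aᶜ) (prodSet g Aᶜ) ∧ c = (μ A).toReal}

lemma circle_coe_meas : Measurable fun z : Circle => (z : ℂ) := by
  have h : Continuous fun z : Circle => (z : ℂ) := continuous_subtype_val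
  exact h.measurable

/-- Rounding a point of the circle. -/
noncomputable def roundC (N : ℕ) (α : ℝ) (z : Circle) : Circle :=
  Circle.exp (2 * Real.pi * (⌊N * Complex.arg z / (2 * Real.pi)⌋ : ℝ) / N + α)

lemma roundC_meas (N : ℕ) (α : ℝ) : Measurable (roundC N α) := by
  unfold roundC
  apply Circle.exp.continuous.measurable.comp
  have h1 : Measurable fun z : Circle => Complex.arg (z : ℂ) :=
    Complex.measurable_arg.comp circle_coe_meas
  have h2 : Measurable fun z : Circle => (⌊N * Complex.arg z / (2 * Real.pi)⌋ : ℝ) :=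
    (measurable_from_top (f := fun t : ℤ => (t : ℝ))).comp
      (Int.measurable_floor.comp ((h1.const_mul _).div_const _))
  exact ((h2.const_mul _).div_const _).add_const _

lemma roundC_pow (N : ℕ) (hN : 0 < N) (α : ℝ) (z : Circle) :
    (roundC N α z) ^ N = Circle.exp (N * α) := by
  unfold roundC
  have hN' : (N : ℝ) ≠ 0 := by positivity
  rw [← Circle.exp_nsmul]
  have : N • (2 * Real.pi * (⌊N * Complex.arg z / (2 * Real.pi)⌋ : ℝ) / N + α)
      = N * α + (⌊N * Complex.arg z / (2 * Real.pi)⌋ : ℝ) * (2 * Real.pi) := by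
    rw [nsmul_eq_mul]; field_simp; ring
  rw [this, Circle.exp_add, Circle.exp_int_mul_two_pi, mul_one]

lemma roundC_dist (N : ℕ) (hN : 0 < N) (α : ℝ) (z : Circle) :
    ‖(z : ℂ) - (roundC N α z : ℂ)‖ ≤ 2 * Real.pi / N + |α| := by
  unfold roundC
  set t := N * Complex.arg z / (2 * Real.pi) with ht
  have hN' : (0 : ℝ) < N := by positivity
  have hpi := Real.pi_pos
  have hz : (z : ℂ) = Complex.exp (Complex.arg z * Complex.I) := by
    have := Complex.norm_mul_exp_arg_mul_I (z : ℂ)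
    rw [Circle.norm_coe] at this
    simpa only [Complex.ofReal_one, one_mul] using this.symm
  set θ := 2 * Real.pi * (⌊t⌋ : ℝ) / N + α with hθ
  have harg : Complex.arg z = 2 * Real.pi * t / N := by
    rw [ht]; field_simp
  have key : (Circle.exp θ : ℂ) = (z : ℂ) * Complex.exp (Complex.I * ((θ - Complex.arg z : ℝ) : ℂ)) := by
    rw [Circle.coe_exp]
    conv_rhs => rw [hz]
    rw [← Complex.exp_add]
    congr 1
    push_cast
    rw [← hz]
    ring
  have : (z : ℂ) - (Circle.exp θ : ℂ)
      = - ((z : ℂ) * (Complex.exp (Complex.I * ((θ - Complex.arg z : ℝ) : ℂ)) - 1)) := by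
    rw [key]; ring
  rw [this, norm_neg, norm_mul, Circle.norm_coe, one_mul]
  refine (Real.norm_exp_I_mul_ofReal_sub_one_le).trans ?_
  rw [Real.norm_eq_abs]
  have e : θ - Complex.arg z = -(2 * Real.pi / N * (t - ⌊t⌋)) + α := by
    rw [harg, hθ]; ring
  rw [e]
  refine (abs_add_le _ _).trans ?_
  have h0 : 0 ≤ t - ⌊t⌋ := by linarith [Int.floor_le t]
  have h1 : t - ⌊t⌋ ≤ 1 := by linarith [Int.lt_floor_add_one t]
  have h2 : 0 ≤ 2 * Real.pi / N := by positivity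
  rw [abs_neg, abs_of_nonneg (mul_nonneg h2 h0)]
  have := mul_le_mul_of_nonneg_left h1 h2
  linarith

section
variable {X : Type*} [MeasurableSpace X] (μ : Measure X) [IsProbabilityMeasure μ]

lemma L0_meas (f g : X →ₘ[μ] Circle) : Measurable fun x => ‖(f x : ℂ) - (g x : ℂ)‖ := by
  have hf : Measurable fun x => (f x : ℂ) := circle_coe_meas.comp f.measurable
  have hg : Measurable fun x => (g x : ℂ) := circle_coe_meas.comp g.measurable
  exact (hf.sub hg).norm

lemma L0_int (f g : X →ₘ[μ] Circle) : Integrable (fun x => ‖(f x : ℂ) - (g x : ℂ)‖) μ := by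
  refine Integrable.of_bound (L0_meas μ f g).aestronglyMeasurable 2 (.of_forall fun x => ?_)
  rw [norm_norm]
  refine (norm_sub_le _ _).trans ?_
  rw [Circle.norm_coe, Circle.norm_coe]; norm_num

lemma L0_tri (f g h : X →ₘ[μ] Circle) : L0dist μ f h ≤ L0dist μ f g + L0dist μ g h := by
  unfold L0dist
  rw [← integral_add (L0_int μ f g) (L0_int μ g h)]
  exact integral_mono (L0_int μ f h) ((L0_int μ f g).add (L0_int μ g h))
    fun x => norm_sub_le_norm_sub_add_norm_sub _ _ _

lemma L0_self (f : X →ₘ[μ] Circle) : L0dist μ f f = 0 := by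
  simp [L0dist]

lemma L0_ball_open (f : X →ₘ[μ] Circle) (ε : ℝ) (hε : 0 < ε) :
    IsOpen {g | L0dist μ f g < ε} :=
  TopologicalSpace.isOpen_generateFrom_of_mem ⟨f, ε, hε, rfl⟩

lemma L0_tendsto (f : X →ₘ[μ] Circle) (u : ℕ → X →ₘ[μ] Circle)
    (h : Filter.Tendsto (fun N => L0dist μ f (u N)) Filter.atTop (nhds 0)) :
    Filter.Tendsto u Filter.atTop (nhds f) := by
  refine TopologicalSpace.tendsto_nhds_generateFrom_iff.2 ?_
  rintro s ⟨g, ε, hε, rfl⟩ hf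
  have hf' : 0 < ε - L0dist μ g f := sub_pos.2 hf
  filter_upwards [h.eventually (gt_mem_nhds hf')] with N hN
  have := L0_tri μ g f (u N)
  change L0dist μ g (u N) < ε
  linarith

noncomputable def roundL (N : ℕ) (α : ℝ) (f : X →ₘ[μ] Circle) : X →ₘ[μ] Circle :=
  AEEqFun.compMeasurable (roundC N α) (roundC_meas N α) f

lemma roundL_dist (N : ℕ) (hN : 0 < N) (α : ℝ) (f : X →ₘ[μ] Circle) :
    L0dist μ f (roundL μ N α f) ≤ 2 * Real.pi / N + |α| := by
  unfold L0dist
  have : ∀ᵐ x ∂μ, ‖(f x : ℂ) - (roundL μ N α f x : ℂ)‖ ≤ 2 * Real.pi / N + |α| := by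
    filter_upwards [AEEqFun.coeFn_compMeasurable (roundC N α) (roundC_meas N α) f] with x hx
    rw [roundL, hx]
    exact roundC_dist N hN α _
  refine (integral_mono_ae (L0_int μ _ _) (integrable_const _) this).trans ?_
  simp

lemma roundL_tendsto (α : ℕ → ℝ) (hα : Filter.Tendsto α Filter.atTop (nhds 0))
    (f : X →ₘ[μ] Circle) :
    Filter.Tendsto (fun N => roundL μ N (α N) f) Filter.atTop (nhds f) := by
  apply L0_tendsto
  have h1 : Filter.Tendsto (fun N : ℕ => 2 * Real.pi / N + |α N|) Filter.atTop (nhds 0) := by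
    simpa using (tendsto_const_div_atTop_nhds_zero_nat (2 * Real.pi)).add hα.abs
  refine squeeze_zero' (.of_forall fun N => integral_nonneg fun x => norm_nonneg _) ?_ h1
  filter_upwards [Filter.eventually_gt_atTop 0] with N hN
  exact roundL_dist μ N hN _ f

lemma roundL_pow (N : ℕ) (hN : 0 < N) (α : ℝ) (f : X →ₘ[μ] Circle) :
    ∀ᵐ x ∂μ, (roundL μ N α f x) ^ N = Circle.exp (N * α) := by
  filter_upwards [AEEqFun.coeFn_compMeasurable (roundC N α) (roundC_meas N α) f] with x hx
  rw [roundL, hx]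
  exact roundC_pow N hN α _

/-- exceptional set -/
def badSet (N : ℕ) (δ : ℝ) (c : Circle) (f g : X →ₘ[μ] Circle) : Set X :=
  {x | δ ≤ ‖(f x : ℂ) - (g x : ℂ)‖} ∪ {x | (f x) ^ N ≠ c}

lemma badSet_meas (N : ℕ) (δ : ℝ) (c : Circle) (f g : X →ₘ[μ] Circle) :
    MeasurableSet (badSet μ N δ c f g) := by
  refine (measurableSet_le measurable_const (L0_meas μ f g)).union ?_
  have : Measurable fun x => (f x) ^ N := (continuous_pow N).measurable.comp f.measurable
  exact (this (measurableSet_singleton c)).compl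

lemma badSet_le (N : ℕ) (δ ε : ℝ) (hδ : 0 < δ) (c : Circle) (f g : X →ₘ[μ] Circle)
    (h0 : ∀ᵐ x ∂μ, (f x) ^ N = c) (h : L0dist μ f g < ε * δ) :
    μ.real (badSet μ N δ c f g) ≤ ε := by
  refine (measureReal_union_le _ _).trans ?_
  have h2 : μ.real {x | (f x) ^ N ≠ c} = 0 := by
    rw [measureReal_def, ae_iff.1 h0]; rfl
  rw [h2, add_zero]
  have := mul_meas_ge_le_integral_of_nonneg (μ := μ)
    (.of_forall fun x => norm_nonneg ((f x : ℂ) - (g x : ℂ))) (L0_int μ f g) δ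
  have h3 : δ * μ.real {x | δ ≤ ‖(f x : ℂ) - (g x : ℂ)‖} ≤ L0dist μ f g := this
  nlinarith

end

lemma prod_close {p : ℕ} (δ : ℝ) (a b : Fin p → Circle)
    (h : ∀ i, ‖(a i : ℂ) - (b i : ℂ)‖ ≤ δ) :
    ‖((∏ i, a i : Circle) : ℂ) - ((∏ i, b i : Circle) : ℂ)‖ ≤ p * δ := by
  induction p with
  | zero => simp
  | succ p ih =>
    rw [Fin.prod_univ_succ, Fin.prod_univ_succ]
    have := ih (fun i => a i.succ) (fun i => b i.succ) (fun i => h _)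
    rw [Circle.coe_mul, Circle.coe_mul]
    push_cast
    set A : Circle := ∏ i : Fin p, a i.succ
    set B : Circle := ∏ i : Fin p, b i.succ
    have e : (a 0 : ℂ) * (A : ℂ) - (b 0 : ℂ) * (B : ℂ) = (a 0 : ℂ) * ((A : ℂ) - (B : ℂ)) + ((a 0 : ℂ) - (b 0 : ℂ)) * (B : ℂ) := by ring
    rw [e]
    refine (norm_add_le _ _).trans ?_
    rw [norm_mul, norm_mul, Circle.norm_coe, Circle.norm_coe]
    linarith [h 0]

lemma pow_close (N : ℕ) (z w : Circle) : ‖(z : ℂ) ^ N - (w : ℂ) ^ N‖ ≤ N * ‖(z : ℂ) - w‖ := by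
  have := prod_close (p := N) ‖(z : ℂ) - w‖ (fun _ => z) (fun _ => w) (fun _ => le_rfl)
  simpa using this

lemma rho_le {X : Type*} [MeasurableSpace X] (μ : Measure X) {p q : ℕ}
    (f : Fin p → X → Circle) (g : Fin q → X → Circle) (A : Set X) (hA : MeasurableSet A)
    (h : Disjoint (prodSet f Aᶜ) (prodSet g Aᶜ)) : rho μ f g ≤ μ.real A := by
  refine csInf_le ⟨0, ?_⟩ ⟨A, hA, h, rfl⟩
  rintro c ⟨B, -, -, rfl⟩
  exact ENNReal.toReal_nonneg

/-- The separation argument. -/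
lemma sep {X : Type*} {p q N : ℕ} (hN : 0 < N) (c d : Circle)
    (hcd : ‖((c ^ p : Circle) : ℂ) - ((d ^ q : Circle) : ℂ)‖ = 2)
    (hpq : 0 < p + q) (f f' : Fin p → X → Circle) (g g' : Fin q → X → Circle) (B : Set X)
    (hf : ∀ i, ∀ x ∈ B, ‖(f i x : ℂ) - f' i x‖ ≤ 1 / (N * (p + q)))
    (hg : ∀ i, ∀ x ∈ B, ‖(g i x : ℂ) - g' i x‖ ≤ 1 / (N * (p + q)))
    (hfc : ∀ i, ∀ x ∈ B, f i x ^ N = c) (hgd : ∀ i, ∀ x ∈ B, g i x ^ N = d) :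
    Disjoint (prodSet f' B) (prodSet g' B) := by
  rw [Set.disjoint_left]
  rintro z ⟨x, hx, hz⟩ ⟨y, hy, hz'⟩
  rw [List.prod_ofFn] at hz hz'
  have h1 := prod_close _ (fun i => f i (x i)) (fun i => f' i (x i)) (fun i => hf i _ (hx i))
  have h2 := prod_close _ (fun i => g i (y i)) (fun i => g' i (y i)) (fun i => hg i _ (hy i))
  rw [← hz] at h1
  rw [← hz'] at h2
  set u : Circle := ∏ i, f i (x i) with hu
  set v : Circle := ∏ i, g i (y i) with hv
  have hun : u ^ N = c ^ p := by
    rw [hu, ← Finset.prod_pow, Finset.prod_congr rfl fun i _ => hfc i _ (hx i)]; simp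
  have hvn : v ^ N = d ^ q := by
    rw [hv, ← Finset.prod_pow, Finset.prod_congr rfl fun i _ => hgd i _ (hy i)]; simp
  have h3 := pow_close N u v
  rw [← Circle.coe_pow, ← Circle.coe_pow, hun, hvn, hcd] at h3
  have h4 : ‖(u : ℂ) - v‖ ≤ ‖(u : ℂ) - z‖ + ‖(v : ℂ) - z‖ := by
    rw [norm_sub_rev (v : ℂ) z]; exact norm_sub_le_norm_sub_add_norm_sub _ _ _
  have hN' : (0 : ℝ) < N := by positivity
  have hpq' : (0 : ℝ) < p + q := by exact_mod_cast hpq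
  have h5 : N * ‖(u : ℂ) - v‖ ≤ N * (p * (1 / (N * (p + q))) + q * (1 / (N * (p + q)))) := by
    gcongr; linarith
  have h6 : (N : ℝ) * (p * (1 / (N * (p + q))) + q * (1 / (N * (p + q)))) = 1 := by
    field_simp
  linarith

/-- Choice of offsets. -/
lemma offsets (p q : ℕ) (hpq : 0 < p + q) : ∃ α β : ℕ → ℝ,
    Filter.Tendsto α Filter.atTop (nhds 0) ∧ Filter.Tendsto β Filter.atTop (nhds 0) ∧
    ∀ N : ℕ, 0 < N → ‖((Circle.exp (N * α N) ^ p : Circle) : ℂ) -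
      ((Circle.exp (N * β N) ^ q : Circle) : ℂ)‖ = 2 := by
  have aux : ∀ r : ℕ, 0 < r → ∀ N : ℕ, 0 < N →
      ((Circle.exp (N * (Real.pi / r / N)) ^ r : Circle) : ℂ) = -1 := by
    intro r hr N hN
    have hN' : (N : ℝ) ≠ 0 := by positivity
    have hr' : (r : ℝ) ≠ 0 := by positivity
    rw [← Circle.exp_nsmul, nsmul_eq_mul]
    have : (r : ℝ) * (N * (Real.pi / r / N)) = Real.pi := by field_simp
    rw [this, Circle.coe_exp, Complex.exp_pi_mul_I]
  by_cases hp : 0 < p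
  · refine ⟨fun N => Real.pi / p / N, fun _ => 0, tendsto_const_div_atTop_nhds_zero_nat _,
      tendsto_const_nhds, fun N hN => ?_⟩
    rw [aux p hp N hN]; simp; norm_num
  · refine ⟨fun _ => 0, fun N => Real.pi / q / N, tendsto_const_nhds,
      tendsto_const_div_atTop_nhds_zero_nat _, fun N hN => ?_⟩
    rw [aux q (by omega) N hN]; simp; norm_num

theorem statement3 {X : Type*} [MeasurableSpace X] [StandardBorelSpace X]
    (μ : Measure X) [IsProbabilityMeasure μ] [NullSingletonClass μ]
    (K m n p q : ℕ) (hK : 0 < K) (k : Fin p → Fin m) (l : Fin q → Fin n) :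
    IsNowhereDense {fg : (Fin m → (X →ₘ[μ] Circle)) × (Fin n → (X →ₘ[μ] Circle)) |
        (1 : ℝ) / K ≤ rho μ (fun i => ⇑(fg.1 (k i))) (fun j => ⇑(fg.2 (l j)))} := by
  have hK' : (0 : ℝ) < K := by positivity
  rcases Nat.eq_zero_or_pos (p + q) with h0 | hpq
  · obtain ⟨rfl, rfl⟩ : p = 0 ∧ q = 0 := by omega
    convert isNowhereDense_empty
    rw [Set.eq_empty_iff_forall_notMem]
    intro fg hfg
    have hr : rho μ (fun i => ⇑(fg.1 (k i))) (fun j => ⇑(fg.2 (l j))) = 0 := by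
      unfold rho
      convert Real.sInf_empty
      rw [Set.eq_empty_iff_forall_notMem]
      rintro c ⟨A, -, hA, -⟩
      refine Set.disjoint_left.1 hA (show (1 : Circle) ∈ _ from ?_) ?_ <;>
      exact ⟨fun i => i.elim0, fun i => i.elim0, by simp⟩
    rw [Set.mem_setOf_eq, hr] at hfg
    have : (0 : ℝ) < 1 / K := by positivity
    linarith
  obtain ⟨α, β, hα, hβ, hab⟩ := offsets p q hpq
  rw [IsNowhereDense, Set.eq_empty_iff_forall_notMem]
  intro fg hfg
  have ht : Filter.Tendsto (fun N : ℕ =>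
      ((fun i => roundL μ N (α N) (fg.1 i), fun j => roundL μ N (β N) (fg.2 j)) :
        (Fin m → (X →ₘ[μ] Circle)) × (Fin n → (X →ₘ[μ] Circle)))) Filter.atTop (nhds fg) := by
    refine Filter.Tendsto.prodMk_nhds (x := fg.1) (y := fg.2) ?_ ?_
    · exact tendsto_pi_nhds.2 fun i => roundL_tendsto μ α hα _
    · exact tendsto_pi_nhds.2 fun i => roundL_tendsto μ β hβ _
  obtain ⟨N, hNU, hN⟩ := ((ht.eventually (isOpen_interior.mem_nhds hfg)).and
    (Filter.eventually_gt_atTop 0)).exists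
  have hcl := interior_subset hNU
  have hN' : (0 : ℝ) < N := by positivity
  have hpq' : (0 : ℝ) < p + q := by exact_mod_cast hpq
  set δ : ℝ := 1 / (N * (p + q)) with hδ
  have hδ0 : 0 < δ := by positivity
  set ε : ℝ := 1 / (K * (m + n + 1)) with hε
  have hε0 : 0 < ε := by positivity
  set F : Fin m → (X →ₘ[μ] Circle) := fun i => roundL μ N (α N) (fg.1 i) with hF
  set G : Fin n → (X →ₘ[μ] Circle) := fun i => roundL μ N (β N) (fg.2 i) with hG
  have hop : IsOpen ((Set.univ.pi fun i => {h | L0dist μ (F i) h < ε * δ}) ×ˢ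
      (Set.univ.pi fun i => {h | L0dist μ (G i) h < ε * δ})) := by
    refine (isOpen_set_pi Set.finite_univ fun i _ => L0_ball_open μ _ _ (by positivity)).prod
      (isOpen_set_pi Set.finite_univ fun i _ => L0_ball_open μ _ _ (by positivity))
  obtain ⟨⟨f', g'⟩, ⟨hf', hg'⟩, hmem⟩ := mem_closure_iff.1 hcl _ hop (by
    refine ⟨fun i _ => ?_, fun i _ => ?_⟩ <;>
    · change L0dist μ _ _ < _
      rw [L0_self]; positivity)
  have hf' : ∀ i, L0dist μ (F i) (f' i) < ε * δ := fun i => hf' i trivial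
  have hg' : ∀ i, L0dist μ (G i) (g' i) < ε * δ := fun i => hg' i trivial
  set c := Circle.exp (N * α N)
  set d := Circle.exp (N * β N)
  set A : Set X := (⋃ i, badSet μ N δ c (F i) (f' i)) ∪ (⋃ i, badSet μ N δ d (G i) (g' i)) with hA
  have hAm : MeasurableSet A :=
    (MeasurableSet.iUnion fun i => badSet_meas μ _ _ _ _ _).union
      (MeasurableSet.iUnion fun i => badSet_meas μ _ _ _ _ _)
  have hAle : μ.real A ≤ m * ε + n * ε := by
    refine (measureReal_union_le _ _).trans (add_le_add ?_ ?_)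
    · refine (measureReal_iUnion_fintype_le _).trans ?_
      refine (Finset.sum_le_sum fun i _ => badSet_le μ N δ ε hδ0 c _ _
        (roundL_pow μ N hN _ _) (hf' i)).trans ?_
      simp
    · refine (measureReal_iUnion_fintype_le _).trans ?_
      refine (Finset.sum_le_sum fun i _ => badSet_le μ N δ ε hδ0 d _ _
        (roundL_pow μ N hN _ _) (hg' i)).trans ?_
      simp
  have hlt : m * ε + n * ε < 1 / K := by
    have : (m + n + 1) * ε = 1 / K := by rw [hε]; field_simp
    linarith
  have hfA : ∀ i, ∀ x ∈ Aᶜ, ‖(F i x : ℂ) - f' i x‖ ≤ δ ∧ F i x ^ N = c := by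
    intro i x hx
    have : x ∉ badSet μ N δ c (F i) (f' i) :=
      fun h => hx (Or.inl (Set.mem_iUnion.2 ⟨i, h⟩))
    simp only [badSet, Set.mem_union, Set.mem_setOf_eq, not_or, not_le, not_not] at this
    exact ⟨this.1.le, this.2⟩
  have hgA : ∀ i, ∀ x ∈ Aᶜ, ‖(G i x : ℂ) - g' i x‖ ≤ δ ∧ G i x ^ N = d := by
    intro i x hx
    have : x ∉ badSet μ N δ d (G i) (g' i) :=
      fun h => hx (Or.inr (Set.mem_iUnion.2 ⟨i, h⟩))
    simp only [badSet, Set.mem_union, Set.mem_setOf_eq, not_or, not_le, not_not] at this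
    exact ⟨this.1.le, this.2⟩
  have hdis := sep (X := X) hN c d (hab N hN) hpq (fun i => ⇑(F (k i))) (fun i => ⇑(f' (k i)))
    (fun i => ⇑(G (l i))) (fun i => ⇑(g' (l i))) Aᶜ
    (fun i x hx => (hfA _ x hx).1) (fun i x hx => (hgA _ x hx).1)
    (fun i x hx => (hfA _ x hx).2) (fun i x hx => (hgA _ x hx).2)
  have := rho_le μ _ _ A hAm hdis
  have hmem' : (1 : ℝ) / K ≤ rho μ (fun i => ⇑(f' (k i))) (fun j => ⇑(g' (l j))) := hmem
  linarith
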